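/- Let f be a homeomorphism of 𝕋^d homotopic to the identity with lift F, and let K ⊆ 𝕋^d be a minimal set of f. Suppose there exist integer vectors v¹, …, v^k ∈ ℤ^d with gcd(vⁱ₁, …, vⁱ_d) = 1 for each i, and a totally irrational vector ρ ∈ ℝ^k (i.e. 1, ρ₁, …, ρ_k are linearly independent over ℚ), such that ρ_K(F) ⊆ ⋂_{i=1}^k ( (ρ_i/‖vⁱ‖²)·vⁱ + {vⁱ}^⊥ ) and f has bounded mean motion parallel to vⁱ on K for each i = 1, …, k. Then f restricted to K is semi-conjugate to the k-dimensional irrational rotation R_ρ : 𝕋^k → 𝕋^k, x ↦ x + ρ mod ℤ^k, via a semi-conjugacy that is regular with respect to some k×d integer matrix B: there is a continuous surjection h : K → 𝕋^k with h∘f = R_ρ∘h on K admitting a lift H : π⁻¹(K) → ℝ^k with H∘F = H + ρ and sup_{z ∈ π⁻¹(K)} ‖H(z) − Bz‖ < ∞. -/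

import Mathlib

open Filter Topology

local notation "⟪" x ", " y "⟫" => @inner ℝ _ _ x y

noncomputable section

/-- Euclidean space `ℝ^d`. -/
abbrev Rd (d : ℕ) := EuclideanSpace ℝ (Fin d)

/-- The `d`-torus `𝕋^d = ℝ^d/ℤ^d`, realized as a product of circles. -/
abbrev Torus (d : ℕ) := Fin d → AddCircle (1 : ℝ)

/-- The quotient map `π : ℝ^d → 𝕋^d`. -/
def projT {d : ℕ} (z : Rd d) : Torus d := fun i => (z i : AddCircle (1 : ℝ))

/-- An integer vector viewed as an element of `ℝ^d`. -/
def intVec {d : ℕ} (m : Fin d → ℤ) : Rd d := WithLp.toLp 2 (fun i => (m i : ℝ))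

/-- A real vector viewed as an element of `ℝ^k`. -/
def vecR {k : ℕ} (ρ : Fin k → ℝ) : Rd k := WithLp.toLp 2 (fun i => ρ i)

/-- `F : ℝ^d → ℝ^d` is a lift of `f : 𝕋^d → 𝕋^d`:  `π ∘ F = f ∘ π` and
`F (z + m) = F z + m` for every integer vector `m`.  The existence of such a lift
expresses that `f` is homotopic to the identity. -/
def IsLift {d : ℕ} (f : Torus d ≃ₜ Torus d) (F : Rd d ≃ₜ Rd d) : Prop :=
  (∀ z : Rd d, projT (F z) = f (projT z)) ∧
  ∀ (z : Rd d) (m : Fin d → ℤ), F (z + intVec m) = F z + intVec m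

/-- The `n`-th iterate (`n ∈ ℤ`) of a homeomorphism. -/
def iterZ {X : Type*} [TopologicalSpace X] (F : X ≃ₜ X) (n : ℤ) : X → X := ⇑(F.toEquiv ^ n)

/-- `K` is a minimal set of `f`: nonempty, compact, invariant, and every orbit in `K`
is dense in `K`. -/
def IsMinimalSet {d : ℕ} (f : Torus d ≃ₜ Torus d) (K : Set (Torus d)) : Prop :=
  K.Nonempty ∧ IsCompact K ∧ f '' K = K ∧
  ∀ x ∈ K, K ⊆ closure (Set.range fun n : ℕ => (⇑f)^[n] x)

/-- `ρ ∈ ℝ^k` is totally irrational: `1, ρ₁, …, ρ_k` are linearly independent over `ℚ`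
(equivalently, over `ℤ`). -/
def TotallyIrrational {k : ℕ} (ρ : Fin k → ℝ) : Prop :=
  ∀ (m : Fin k → ℤ) (n : ℤ), (∑ i, (m i : ℝ) * ρ i) = (n : ℝ) → m = 0 ∧ n = 0

/-- The rotation `R_ρ : 𝕋^k → 𝕋^k`, `x ↦ x + ρ mod ℤ^k`. -/
def rotT {k : ℕ} (ρ : Fin k → ℝ) : Torus k → Torus k :=
  fun x i => x i + (ρ i : AddCircle (1 : ℝ))

/-- The rotation set of `F` on `K`:  all limits `(F^{nᵢ} xᵢ − xᵢ)/nᵢ → ρ` with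
`nᵢ ↗ ∞` and `xᵢ ∈ π⁻¹(K)`. -/
def rotSetOn {d : ℕ} (F : Rd d ≃ₜ Rd d) (K : Set (Torus d)) : Set (Rd d) :=
  {ρ | ∃ (n : ℕ → ℕ) (x : ℕ → Rd d), StrictMono n ∧ (∀ i, projT (x i) ∈ K) ∧
    Tendsto (fun i => (n i : ℝ)⁻¹ • ((⇑F)^[n i] (x i) - x i)) atTop (𝓝 ρ)}

/-- The affine hyperplane `lam • v + {v}^⊥`. -/
def affHyp {d : ℕ} (v : Rd d) (lam : ℝ) : Set (Rd d) :=
  {w | ∃ u : Rd d, ⟪u, v⟫ = 0 ∧ w = lam • v + u}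

/-- Bounded mean motion parallel to `v` on `K`:  `|⟨Fⁿ z − z − n ρ, v⟩| ≤ c` for all
`n ∈ ℤ` and `z ∈ π⁻¹(K)`, where `ρ = lam • v` is a point of the hyperplane
`lam • v + {v}^⊥` containing the rotation set (the value of the inner product does
not depend on the choice of `ρ` in this hyperplane). -/
def BddMeanMotionParallelOn {d : ℕ} (F : Rd d ≃ₜ Rd d) (v : Rd d) (lam : ℝ)
    (K : Set (Torus d)) : Prop :=
  ∃ c : ℝ, 0 < c ∧ ∀ (n : ℤ) (z : Rd d), projT z ∈ K →
    |⟪iterZ F n z - z - (n : ℝ) • (lam • v), v⟫| ≤ c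

/-!
Since `F` commutes with integer translations, its displacement `F z - z` descends to a continuous
map on `𝕋^d`, whose Birkhoff sums along `f` are `Fⁿ z - z`. Bounded mean motion parallel to `vⁱ`
says that the Birkhoff sums of `⟨F z - z, vⁱ⟩ - ρᵢ` are bounded on `K`, so by the
Gottschalk–Hedlund theorem this function equals `uᵢ ∘ f - uᵢ` on `K` with `uᵢ` continuous on `K`.
With `B` the matrix of rows `vⁱ` and `U = (u₁, …, u_k)`, the map `h x = B x - U x mod ℤ^k`
semi-conjugates `f` to `R_ρ` on `K`. Its image is a nonempty closed `R_ρ`-invariant set, hence all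
of `𝕋^k`: the distance to such a set does not increase under `R_ρ`, hence is invariant since `R_ρ`
preserves Haar measure, and a continuous function invariant under a totally irrational rotation has
vanishing nonconstant Fourier coefficients.
-/

section GottschalkHedlund

open Set

variable {X : Type*} [TopologicalSpace X] {T : X → X} {K : Set X}

theorem eq_of_lowerSemicontinuousOn_of_comp_le {γ : Type*} [LinearOrder γ] {g : X → γ}
    (hdense : ∀ x ∈ K, K ⊆ closure (range fun n : ℕ => T^[n] x)) (hT : MapsTo T K K)
    (hg : LowerSemicontinuousOn g K) (hle : ∀ x ∈ K, g (T x) ≤ g x) {x y : X} (hx : x ∈ K)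
    (hy : y ∈ K) : g x = g y := by
  have orbit_le : ∀ y ∈ K, ∀ n, g (T^[n] y) ≤ g y := by
    intro y hy n
    induction n with
    | zero => rfl
    | succ n ih =>
      rw [Function.iterate_succ_apply']
      exact (hle _ (hT.iterate n hy)).trans ih
  have le : ∀ x ∈ K, ∀ y ∈ K, g x ≤ g y := by
    intro x hx y hy
    by_contra! hlt
    obtain ⟨U, hU, hxU, hUg⟩ := mem_nhdsWithin.1 (hg x hx _ hlt)
    obtain ⟨_, hnU, n, rfl⟩ := mem_closure_iff.1 (hdense y hy hx) U hU hxU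
    exact (orbit_le y hy n).not_gt (hUg ⟨hnU, hT.iterate n hy⟩)
  exact le_antisymm (le x hx y hy) (le y hy x hx)

theorem continuousOn_birkhoffSum {M : Type*} [AddCommMonoid M] [TopologicalSpace M]
    [ContinuousAdd M] {φ : X → M} (hT : ContinuousOn T K) (hmaps : MapsTo T K K)
    (hφ : ContinuousOn φ K) (n : ℕ) : ContinuousOn (birkhoffSum T φ n) K :=
  continuousOn_finsetSum _ fun j _ => hφ.comp (hT.iterate hmaps j) (hmaps.iterate j)

theorem iSup_birkhoffSum_apply_le {α : Type*} {T : α → α} {φ : α → ℝ} {x : α}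
    (hx : BddAbove (range fun n => birkhoffSum T φ n x)) :
    ⨆ n, birkhoffSum T φ n (T x) ≤ (⨆ n, birkhoffSum T φ n x) - φ x := by
  refine ciSup_le fun n => le_sub_iff_add_le'.2 ?_
  rw [← birkhoffSum_succ']
  exact le_ciSup hx (n + 1)

theorem le_iInf_birkhoffSum_apply {α : Type*} {T : α → α} {φ : α → ℝ} {x : α}
    (hx : BddBelow (range fun n => birkhoffSum T φ n x)) :
    (⨅ n, birkhoffSum T φ n x) - φ x ≤ ⨅ n, birkhoffSum T φ n (T x) := by
  refine le_ciInf fun n => sub_le_iff_le_add'.2 ?_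
  rw [← birkhoffSum_succ']
  exact ciInf_le hx (n + 1)

theorem exists_continuousOn_apply_eq_add_of_isBounded_birkhoffSum {φ : X → ℝ}
    (hdense : ∀ x ∈ K, K ⊆ closure (range fun n : ℕ => T^[n] x)) (hT : ContinuousOn T K)
    (hmaps : MapsTo T K K) (hφ : ContinuousOn φ K)
    (hbdd : ∀ x ∈ K, Bornology.IsBounded (range fun n => birkhoffSum T φ n x)) :
    ∃ u : X → ℝ, ContinuousOn u K ∧ ∀ x ∈ K, u (T x) = u x + φ x := by
  set S : X → ℝ := fun x => ⨆ n, birkhoffSum T φ n x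
  set I : X → ℝ := fun x => ⨅ n, birkhoffSum T φ n x
  have hcont n : ContinuousOn (birkhoffSum T φ n) K := continuousOn_birkhoffSum hT hmaps hφ n
  have hS : LowerSemicontinuousOn S K :=
    lowerSemicontinuousOn_ciSup (fun x hx => (hbdd x hx).bddAbove)
      fun n => (hcont n).lowerSemicontinuousOn
  have hI : UpperSemicontinuousOn I K :=
    upperSemicontinuousOn_ciInf (fun x hx => (hbdd x hx).bddBelow)
      fun n => (hcont n).upperSemicontinuousOn
  have hST x (hx : x ∈ K) : S (T x) ≤ S x - φ x := iSup_birkhoffSum_apply_le (hbdd x hx).bddAbove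
  have hIT x (hx : x ∈ K) : I x - φ x ≤ I (T x) := le_iInf_birkhoffSum_apply (hbdd x hx).bddBelow
  -- The oscillation `S - I` does not increase along orbits, so it is constant on `K`; this turns
  -- `hST` into an equality and transfers the upper semicontinuity of `I` to `S`.
  have hosc : LowerSemicontinuousOn (fun x => S x + -I x) K :=
    hS.add fun x hx b hb =>
      (hI x hx (-b) (lt_neg_of_lt_neg hb)).mono fun y hy => lt_neg_of_lt_neg hy
  have hconst {x y : X} (hx : x ∈ K) (hy : y ∈ K) : S x + -I x = S y + -I y :=
    eq_of_lowerSemicontinuousOn_of_comp_le hdense hmaps hosc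
      (fun x hx => by linarith [hST x hx, hIT x hx]) hx hy
  have hSusc : UpperSemicontinuousOn S K := fun x hx b hb => by
    filter_upwards [hI x hx (b - (S x + -I x)) (by linarith), self_mem_nhdsWithin] with y hy hyK
    linarith [hconst hx hyK]
  refine ⟨-S, (continuousOn_iff_lower_upperSemicontinuousOn.2 ⟨hS, hSusc⟩).neg, fun x hx => ?_⟩
  simp only [Pi.neg_apply]
  linarith [hST x hx, hIT x hx, hconst hx (hmaps hx)]

end GottschalkHedlund

section IrrationalRotation

open MeasureTheory UnitAddTorus

theorem comp_eq_of_measurePreserving_of_comp_le {X : Type*} [TopologicalSpace X]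
    [CompactSpace X] [MeasurableSpace X] [OpensMeasurableSpace X] {μ : Measure X}
    [IsFiniteMeasure μ] [μ.IsOpenPosMeasure] {T : X → X} (hT : MeasurePreserving T μ μ)
    (hTc : Continuous T) {g : X → ℝ} (hg : Continuous g) (hle : g ∘ T ≤ g) : g ∘ T = g := by
  have hint {g : X → ℝ} (hg : Continuous g) : Integrable g μ :=
    hg.integrable_of_hasCompactSupport (.of_compactSpace g)
  have hintegral : ∫ x, (g ∘ T) x ∂μ = ∫ x, g x ∂μ := by
    conv_rhs => rw [← hT.map_eq]
    exact (integral_map hT.aemeasurable hg.aestronglyMeasurable).symm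
  have hae : g ∘ T =ᵐ[μ] g :=
    (integral_eq_iff_of_ae_le (hint (hg.comp hTc)) (hint hg) (.of_forall hle)).1 hintegral
  exact ((hg.comp hTc).ae_eq_iff_eq μ hg).1 hae

attribute [local instance] instMeasureSpaceUnitAddCircle instIsAddHaarMeasureUnitAddCircleVolume
  instIsProbabilityMeasureUnitAddCircleVolume

variable {ι : Type*} [Fintype ι]

theorem mFourier_apply_add (m : ι → ℤ) (x y : UnitAddTorus ι) :
    mFourier m (x + y) = mFourier m x * mFourier m y := by
  simp only [mFourier, ContinuousMap.coe_mk, Pi.add_apply, fourier_apply, smul_add,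
    AddCircle.toCircle_add, Circle.coe_mul, Finset.prod_mul_distrib]

theorem mFourierCoeff_comp_add_right {E : Type*} [NormedAddCommGroup E] [NormedSpace ℂ E]
    (g : UnitAddTorus ι → E) (a : UnitAddTorus ι) (m : ι → ℤ) :
    mFourierCoeff (fun x => g (x + a)) m = mFourier m a • mFourierCoeff g m := by
  have hchar : mFourier m a * mFourier (-m) a = 1 := by
    rw [← mFourier_add, add_neg_cancel, mFourier_zero, ContinuousMap.one_apply]
  calc mFourierCoeff (fun x => g (x + a)) m
      = ∫ x, mFourier m a • mFourier (-m) (x + a) • g (x + a) := by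
        refine integral_congr_ae (.of_forall fun x => ?_)
        simp only [smul_smul, mFourier_apply_add]
        rw [mul_left_comm, hchar, mul_one]
    _ = mFourier m a • mFourierCoeff g m := by
        rw [integral_smul]
        exact congrArg _ (integral_add_right_eq_self (fun x => mFourier (-m) x • g x) a)

theorem eq_mFourierCoeff_zero {g : C(UnitAddTorus ι, ℂ)} (hg : ∀ m ≠ 0, mFourierCoeff g m = 0)
    (x : UnitAddTorus ι) : g x = mFourierCoeff g 0 := by
  have hsum := hasSum_mFourier_series_apply_of_summable
    (summable_of_ne_finset_zero (s := {0}) fun m hm => hg m (by simpa using hm)) x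
  have hsingle := hasSum_single (f := fun m => mFourierCoeff g m • mFourier m x) 0
    fun m hm => by rw [hg m hm, zero_smul]
  simpa only [mFourier_zero, ContinuousMap.one_apply, smul_eq_mul, mul_one]
    using hsum.unique hsingle

theorem eq_of_forall_apply_add_eq {a : UnitAddTorus ι} (ha : ∀ m ≠ 0, mFourier m a ≠ 1)
    {g : C(UnitAddTorus ι, ℂ)} (hg : ∀ x, g (x + a) = g x) (x y : UnitAddTorus ι) :
    g x = g y := by
  have hcoeff : ∀ m ≠ 0, mFourierCoeff g m = 0 := by
    intro m hm
    have h := mFourierCoeff_comp_add_right g a m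
    simp only [hg] at h
    have h' : (mFourier m a - 1) * mFourierCoeff g m = 0 := by
      rw [sub_mul, one_mul, ← smul_eq_mul, ← h, sub_self]
    exact (mul_eq_zero.1 h').resolve_left (sub_ne_zero.2 (ha m hm))
  rw [eq_mFourierCoeff_zero hcoeff x, eq_mFourierCoeff_zero hcoeff y]

theorem infDist_add_right_le {G : Type*} [SeminormedAddCommGroup G] {C : Set G} {a : G}
    (hC : Set.MapsTo (· + a) C C) (x : G) : Metric.infDist (x + a) C ≤ Metric.infDist x C := by
  rcases C.eq_empty_or_nonempty with rfl | hne
  · simp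
  calc Metric.infDist (x + a) C
      ≤ Metric.infDist (x + a) ((· + a) '' C) :=
        Metric.infDist_le_infDist_of_subset hC.image_subset (hne.image _)
    _ = Metric.infDist x C := Metric.infDist_image (isometry_add_right a)

theorem eq_univ_of_isClosed_of_mapsTo_add_right {a : UnitAddTorus ι}
    (ha : ∀ m ≠ 0, mFourier m a ≠ 1) {C : Set (UnitAddTorus ι)} (hC : IsClosed C)
    (hne : C.Nonempty) (hmaps : Set.MapsTo (· + a) C C) : C = Set.univ := by
  have hinv : (Metric.infDist · C) ∘ (· + a) = (Metric.infDist · C) :=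
    comp_eq_of_measurePreserving_of_comp_le (measurePreserving_add_right volume a)
      (continuous_add_const a) (Metric.continuous_infDist_pt C) (infDist_add_right_le hmaps)
  let g : C(UnitAddTorus ι, ℂ) := ⟨fun x => Metric.infDist x C, by fun_prop⟩
  obtain ⟨y, hy⟩ := hne
  refine Set.eq_univ_of_forall fun x => (hC.mem_iff_infDist_zero ⟨y, hy⟩).2 ?_
  rw [← Metric.infDist_zero_of_mem hy]
  exact Complex.ofReal_injective
    (eq_of_forall_apply_add_eq ha (g := g) (fun x => congrArg Complex.ofReal (congrFun hinv x)) x y)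

theorem mFourier_projT {k : ℕ} (m : Fin k → ℤ) (z : Rd k) :
    mFourier m (projT z) =
      Complex.exp ((∑ i, (m i : ℝ) * z i : ℝ) * (2 * Real.pi * Complex.I)) := by
  simp only [mFourier, ContinuousMap.coe_mk, projT, fourier_coe_apply]
  rw [← Complex.exp_sum]
  push_cast
  rw [Finset.sum_mul]
  refine congrArg _ (Finset.sum_congr rfl fun i _ => ?_)
  ring

theorem TotallyIrrational.mFourier_projT_ne_one {k : ℕ} {ρ : Fin k → ℝ}
    (hρ : TotallyIrrational ρ) {m : Fin k → ℤ} (hm : m ≠ 0) :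
    mFourier m (projT (vecR ρ)) ≠ 1 := by
  rw [mFourier_projT, Ne, Complex.exp_eq_one_iff]
  rintro ⟨n, hn⟩
  exact hm (hρ m n (by exact_mod_cast mul_right_cancel₀ Complex.two_pi_I_ne_zero hn)).1

theorem TotallyIrrational.eq_univ_of_isClosed_of_mapsTo_rotT {k : ℕ} {ρ : Fin k → ℝ}
    (hρ : TotallyIrrational ρ) {C : Set (Torus k)} (hC : IsClosed C) (hne : C.Nonempty)
    (hmaps : Set.MapsTo (rotT ρ) C C) : C = Set.univ :=
  eq_univ_of_isClosed_of_mapsTo_add_right (a := projT (vecR ρ))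
    (fun _ hm => hρ.mFourier_projT_ne_one hm) hC hne hmaps

end IrrationalRotation

section Torus

variable {d k : ℕ}

theorem isOpenQuotientMap_projT : IsOpenQuotientMap (projT : Rd d → Torus d) :=
  (IsOpenQuotientMap.piMap fun _ : Fin d =>
    (QuotientAddGroup.isOpenQuotientMap_mk :
      IsOpenQuotientMap ((↑) : ℝ → AddCircle (1 : ℝ)))).comp
    (EuclideanSpace.equiv (Fin d) ℝ).toHomeomorph.isOpenQuotientMap

theorem exists_eq_add_intVec_of_projT_eq {z w : Rd d} (h : projT z = projT w) :
    ∃ m : Fin d → ℤ, z = w + intVec m := by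
  have hcoord i : ∃ n : ℤ, z i = w i + n := by
    have hdiff : ((z i - w i : ℝ) : AddCircle (1 : ℝ)) = 0 := sub_eq_zero.2 (congrFun h i)
    obtain ⟨n, hn⟩ := (AddCircle.coe_eq_zero_iff 1).1 hdiff
    rw [zsmul_one] at hn
    exact ⟨n, by linarith⟩
  choose m hm using hcoord
  exact ⟨m, PiLp.ext hm⟩

theorem intVec_ne_zero {v : Fin d → ℤ} (hv : v ≠ 0) : intVec v ≠ 0 := by
  contrapose! hv
  ext j
  simpa [intVec] using congrArg (fun z : Rd d => z j) hv

/-- The linear map `ℝ^d → ℝ^k`, `z ↦ B z`, of an integer matrix `B`, given by its rows. -/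
def intMatMul (B : Fin k → Fin d → ℤ) (z : Rd d) : Rd k := vecR fun i => ∑ j, (B i j : ℝ) * z j

/-- The homomorphism `𝕋^d → 𝕋^k`, `x ↦ B x mod ℤ^k`, covered by the linear map `intMatMul B`. -/
def torusMatMul (B : Fin k → Fin d → ℤ) (x : Torus d) : Torus k := fun i => ∑ j, B i j • x j

theorem intMatMul_apply (B : Fin k → Fin d → ℤ) (z : Rd d) (i : Fin k) :
    intMatMul B z i = ⟪z, intVec (B i)⟫ := by
  simp [intMatMul, vecR, intVec, PiLp.inner_apply]

theorem intMatMul_sub (B : Fin k → Fin d → ℤ) (z w : Rd d) :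
    intMatMul B (z - w) = intMatMul B z - intMatMul B w := by
  ext i
  simp only [PiLp.sub_apply, intMatMul_apply, inner_sub_left]

theorem projT_intMatMul (B : Fin k → Fin d → ℤ) (z : Rd d) :
    projT (intMatMul B z) = torusMatMul B (projT z) := by
  ext i
  simp [projT, intMatMul, torusMatMul, vecR]

theorem continuous_torusMatMul (B : Fin k → Fin d → ℤ) : Continuous (torusMatMul B) := by
  unfold torusMatMul
  fun_prop

end Torus

section Displacement

variable {d k : ℕ} {f : Torus d ≃ₜ Torus d} {F : Rd d ≃ₜ Rd d} {K : Set (Torus d)}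

theorem factorsThrough_projT_apply_sub (hF : IsLift f F) :
    Function.FactorsThrough (fun z => F z - z) projT := by
  intro z w h
  obtain ⟨m, rfl⟩ := exists_eq_add_intVec_of_projT_eq h
  simp only [hF.2, add_sub_add_right_eq_sub]

/-- The displacement `F z - z` of a lift `F` of `f`, as a continuous map on the torus. -/
def displacement (hF : IsLift f F) : C(Torus d, Rd d) :=
  isOpenQuotientMap_projT.isQuotientMap.lift (f := ⟨projT, isOpenQuotientMap_projT.continuous⟩)
    ⟨fun z => F z - z, by fun_prop⟩ (factorsThrough_projT_apply_sub hF)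

theorem displacement_projT (hF : IsLift f F) (z : Rd d) :
    displacement hF (projT z) = F z - z :=
  DFunLike.congr_fun (isOpenQuotientMap_projT.isQuotientMap.lift_comp
    (f := ⟨projT, isOpenQuotientMap_projT.continuous⟩) ⟨fun z => F z - z, by fun_prop⟩
    (factorsThrough_projT_apply_sub hF)) z

theorem birkhoffSum_displacement (hF : IsLift f F) (n : ℕ) (z : Rd d) :
    birkhoffSum f (displacement hF) n (projT z) = (⇑F)^[n] z - z := by
  have hsemi : Function.Semiconj projT F f := hF.1
  induction n with
  | zero => simp
  | succ n ih =>
    rw [birkhoffSum_succ, ih, ← (hsemi.iterate_right n).eq, displacement_projT,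
      Function.iterate_succ_apply']
    abel

theorem birkhoffSum_inner_displacement (hF : IsLift f F) (w : Rd d) (lam : ℝ) (n : ℕ) (z : Rd d) :
    birkhoffSum f (fun x => ⟪displacement hF x - lam • w, w⟫) n (projT z) =
      ⟪(⇑F)^[n] z - z - (n : ℝ) • (lam • w), w⟫ := by
  rw [← birkhoffSum_displacement hF, birkhoffSum, birkhoffSum, ← sum_inner,
    Finset.sum_sub_distrib, Finset.sum_const, Finset.card_range, Nat.cast_smul_eq_nsmul]

theorem iterZ_natCast {X : Type*} [TopologicalSpace X] (F : X ≃ₜ X) (n : ℕ) :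
    iterZ F n = (⇑F)^[n] := by
  rw [iterZ, zpow_natCast]
  exact (Equiv.Perm.iterate_eq_pow F.toEquiv n).symm

theorem IsMinimalSet.mapsTo (hK : IsMinimalSet f K) : Set.MapsTo f K K :=
  Set.mapsTo_iff_image_subset.2 hK.2.2.1.subset

theorem BddMeanMotionParallelOn.exists_apply_eq_add_inner_displacement {w : Rd d} {lam : ℝ}
    (hbmm : BddMeanMotionParallelOn F w lam K) (hF : IsLift f F) (hK : IsMinimalSet f K) :
    ∃ u : Torus d → ℝ, ContinuousOn u K ∧
      ∀ x ∈ K, u (f x) = u x + ⟪displacement hF x - lam • w, w⟫ := by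
  obtain ⟨c, -, hc⟩ := hbmm
  refine exists_continuousOn_apply_eq_add_of_isBounded_birkhoffSum hK.2.2.2
    f.continuous.continuousOn hK.mapsTo (by fun_prop) fun x hx => ?_
  obtain ⟨z, rfl⟩ := isOpenQuotientMap_projT.surjective x
  refine isBounded_iff_forall_norm_le.2 ⟨c, Set.forall_mem_range.2 fun n => ?_⟩
  rw [birkhoffSum_inner_displacement, ← iterZ_natCast]
  exact hc n z hx

theorem exists_apply_eq_add_intMatMul_displacement {v : Fin k → Fin d → ℤ} (hv : ∀ i, v i ≠ 0)
    {ρ : Fin k → ℝ}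
    (hbmm : ∀ i, BddMeanMotionParallelOn F (intVec (v i)) (ρ i / ‖intVec (v i)‖ ^ 2) K)
    (hF : IsLift f F) (hK : IsMinimalSet f K) :
    ∃ U : Torus d → Rd k, ContinuousOn U K ∧
      ∀ x ∈ K, U (f x) = U x + (intMatMul v (displacement hF x) - vecR ρ) := by
  choose u hu hcob using fun i => (hbmm i).exists_apply_eq_add_inner_displacement hF hK
  refine ⟨fun x => vecR fun i => u i x,
    (PiLp.continuous_toLp 2 _).comp_continuousOn (continuousOn_pi.2 hu), fun x hx => ?_⟩
  ext i
  have hnorm : ‖intVec (v i)‖ ^ 2 ≠ 0 := pow_ne_zero 2 (norm_ne_zero_iff.2 (intVec_ne_zero (hv i)))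
  have hi := hcob i x hx
  rw [inner_sub_left, real_inner_smul_left, real_inner_self_eq_norm_sq, div_mul_cancel₀ _ hnorm,
    ← intMatMul_apply] at hi
  exact hi

end Displacement

theorem statement2_general {d k : ℕ} (f : Torus d ≃ₜ Torus d) (F : Rd d ≃ₜ Rd d)
    (hF : IsLift f F) (K : Set (Torus d)) (hK : IsMinimalSet f K)
    (v : Fin k → Fin d → ℤ) (hv : ∀ i, v i ≠ 0) (ρ : Fin k → ℝ) (hρ : TotallyIrrational ρ)
    (hbmm : ∀ i, BddMeanMotionParallelOn F (intVec (v i)) (ρ i / ‖intVec (v i)‖ ^ 2) K) :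
    ∃ h : Torus d → Torus k,
      ContinuousOn h K ∧ h '' K = Set.univ ∧
      (∀ x ∈ K, h (f x) = rotT ρ (h x)) ∧
      ∃ H : Rd d → Rd k,
        (∀ z : Rd d, projT z ∈ K → projT (H z) = h (projT z)) ∧
        (∀ z : Rd d, projT z ∈ K → H (F z) = H z + vecR ρ) ∧
        ∃ c : ℝ, ∀ z : Rd d, projT z ∈ K → ‖H z - intMatMul v z‖ ≤ c := by
  obtain ⟨U, hU, hcob⟩ := exists_apply_eq_add_intMatMul_displacement hv hbmm hF hK
  let h (x : Torus d) : Torus k := torusMatMul v x - projT (U x)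
  let H (z : Rd d) : Rd k := intMatMul v z - U (projT z)
  have hcont : ContinuousOn h K := (continuous_torusMatMul v).continuousOn.sub
    (isOpenQuotientMap_projT.continuous.comp_continuousOn hU)
  have hlift z : projT (H z) = h (projT z) :=
    congrArg (· - projT (U (projT z))) (projT_intMatMul v z)
  have htrans z (hz : projT z ∈ K) : H (F z) = H z + vecR ρ := by
    simp only [H, hF.1, hcob _ hz, displacement_projT, intMatMul_sub]
    abel
  have hsemi : ∀ x ∈ K, h (f x) = rotT ρ (h x) := by
    intro x hx
    obtain ⟨z, rfl⟩ := isOpenQuotientMap_projT.surjective x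
    rw [← hF.1, ← hlift, htrans z hx, ← hlift]
    rfl
  have hsurj : h '' K = Set.univ := hρ.eq_univ_of_isClosed_of_mapsTo_rotT
    (hK.2.1.image_of_continuousOn hcont).isClosed (hK.1.image h)
    (by rintro _ ⟨x, hx, rfl⟩; exact ⟨f x, hK.mapsTo hx, hsemi x hx⟩)
  obtain ⟨c, hc⟩ := hK.2.1.exists_bound_of_continuousOn hU
  refine ⟨h, hcont, hsurj, hsemi, H, fun z _ => hlift z, htrans, c, fun z hz => ?_⟩
  rw [sub_sub_cancel_left, norm_neg]
  exact hc _ hz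

/-- **Corollary 2.2.**  If the rotation set of `f` on a minimal set `K` is contained in
the intersection of the hyperplanes `(ρᵢ/‖vⁱ‖²) vⁱ + {vⁱ}^⊥` for integer vectors
`v¹, …, v^k` with coprime coordinates and a totally irrational `ρ ∈ ℝ^k`, and `f` has
bounded mean motion parallel to each `vⁱ` on `K`, then `f|_K` is semi-conjugate to the
`k`-dimensional irrational rotation `R_ρ`, regularly with respect to some `k × d`
integer matrix `B`. -/
theorem statement2 {d k : ℕ} (f : Torus d ≃ₜ Torus d) (F : Rd d ≃ₜ Rd d) (hF : IsLift f F)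
    (K : Set (Torus d)) (hK : IsMinimalSet f K)
    (v : Fin k → Fin d → ℤ) (hgcd : ∀ i, Finset.univ.gcd (v i) = 1)
    (ρ : Fin k → ℝ) (hρ : TotallyIrrational ρ)
    (hrot : rotSetOn F K ⊆ ⋂ i, affHyp (intVec (v i)) (ρ i / ‖intVec (v i)‖ ^ 2))
    (hbmm : ∀ i, BddMeanMotionParallelOn F (intVec (v i)) (ρ i / ‖intVec (v i)‖ ^ 2) K) :
    ∃ (h : Torus d → Torus k) (B : Fin k → Fin d → ℤ),
      ContinuousOn h K ∧ h '' K = Set.univ ∧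
      (∀ x ∈ K, h (f x) = rotT ρ (h x)) ∧
      ∃ H : Rd d → Rd k,
        (∀ z : Rd d, projT z ∈ K → projT (H z) = h (projT z)) ∧
        (∀ z : Rd d, projT z ∈ K → H (F z) = H z + vecR ρ) ∧
        ∃ c : ℝ, ∀ z : Rd d, projT z ∈ K →
          ‖H z - vecR (fun i => ∑ j, (B i j : ℝ) * z j)‖ ≤ c := by
  have hv i : v i ≠ 0 := fun h =>
    zero_ne_one ((Finset.gcd_eq_zero_iff.2 fun j _ => congrFun h j).symm.trans (hgcd i))
  obtain ⟨h, hh⟩ := statement2_general f F hF K hK v hv ρ hρ hbmm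
  exact ⟨h, v, hh⟩
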